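/- arXiv:2003.00372 — 2 statements merged into one kernel-verified Lean document; each statement's English description precedes it below -/
import Mathlib

section
/- Decrement bound via H: Let p be a polynomial with complex coefficients of degree n ≥ 2, F(z) = |p(z)|², and let z₀ ∈ ℂ with p(z₀) ≠ 0. With k = k(z₀), A = A(z₀), C_k the Robust Newton parameters at z₀ and z₁ = N̂_p(z₀) the Robust Newton iterate, one has F(z₁) − F(z₀) ≤ 6·A²·H_{C_k}(C_k/3), where H_C(x) = −C·x^k + x^(k+1)/(1−x). -/
open Polynomial Filter Topology
open scoped Classical

noncomputable section

/-- The `j`-th derivative of `p`, evaluated at `z`. -/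
def dEval (p : Polynomial ℂ) (j : ℕ) (z : ℂ) : ℂ :=
  (Polynomial.derivative^[j] p).eval z

/-- The index `k(z) = min {j ≥ 1 : p^{(j)}(z) ≠ 0}`. -/
def kIndex (p : Polynomial ℂ) (z : ℂ) : ℕ :=
  sInf {j : ℕ | 1 ≤ j ∧ dEval p j z ≠ 0}

/-- `A(z) = max {|p^{(j)}(z)|/j! : j = 0, …, n}`, where `n` is the degree of `p`. -/
def Amax (p : Polynomial ℂ) (z : ℂ) : ℝ :=
  (Finset.range (p.natDegree + 1)).sup' Finset.nonempty_range_add_one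
    (fun j => ‖dEval p j z‖ / (Nat.factorial j))

/-- `u_m = (1/m!) · p(z) · conj(p^{(m)}(z))`. -/
def uPar (p : Polynomial ℂ) (m : ℕ) (z : ℂ) : ℂ :=
  (1 / (Nat.factorial m : ℂ)) * p.eval z * (starRingEnd ℂ) (dEval p m z)

/-- `γ = 2 · Re(u_m^(m-1))`. -/
def gammaPar (p : Polynomial ℂ) (m : ℕ) (z : ℂ) : ℝ :=
  2 * ((uPar p m z) ^ (m - 1)).re

/-- `δ = -2 · Im(u_m^(m-1))`. -/
def deltaPar (p : Polynomial ℂ) (m : ℕ) (z : ℂ) : ℝ :=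
  -2 * ((uPar p m z) ^ (m - 1)).im

/-- `c_m = max {|γ|, |δ|}`. -/
def cPar (p : Polynomial ℂ) (m : ℕ) (z : ℂ) : ℝ :=
  max |gammaPar p m z| |deltaPar p m z|

/-- The angle `θ`: `0` if `c = |γ|, γ < 0`; `π/m` if `c = |γ|, γ > 0`;
`π/(2m)` if `c = |δ|, δ < 0`; `3π/(2m)` if `c = |δ|, δ > 0`. -/
def thetaPar (p : Polynomial ℂ) (m : ℕ) (z : ℂ) : ℝ :=
  if cPar p m z = |gammaPar p m z| then
    if gammaPar p m z < 0 then 0 else Real.pi / m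
  else
    if deltaPar p m z < 0 then Real.pi / (2 * m) else 3 * Real.pi / (2 * m)

/-- `C_m = c_m · |u_m|^(2-m) / (6 · A(z)²)`. -/
def CPar (p : Polynomial ℂ) (m : ℕ) (z : ℂ) : ℝ :=
  cPar p m z * ‖uPar p m z‖ ^ ((2 : ℤ) - (m : ℤ)) / (6 * (Amax p z) ^ 2)

/-- The Robust Newton iterate with prescribed index `m`:
`z + (C_m/3) · (u_m/|u_m|) · e^(iθ)`. -/
def rniWith (p : Polynomial ℂ) (m : ℕ) (z : ℂ) : ℂ :=
  z + (↑(CPar p m z / 3) : ℂ) * (uPar p m z / (↑(‖uPar p m z‖) : ℂ)) *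
    Complex.exp ((↑(thetaPar p m z) : ℂ) * Complex.I)

/-- The Robust Newton iterate `N̂_p(z)`. -/
def RN (p : Polynomial ℂ) (z : ℂ) : ℂ := rniWith p (kIndex p z) z

/-- The RNM orbit of the seed `z₀`: `z_{t+1} = N̂_p(z_t)` when `p(z_t) ≠ 0`,
and `z_{t+1} = z_t` when `p(z_t) = 0`. -/
def rnmOrbit (p : Polynomial ℂ) (z₀ : ℂ) : ℕ → ℂ
  | 0 => z₀
  | t + 1 =>
      if p.eval (rnmOrbit p z₀ t) = 0 then rnmOrbit p z₀ t
      else RN p (rnmOrbit p z₀ t)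

/-!
Expand `p` around `z₀` as `p(z₀ + h) = a₀ + a_k h^k + R`, where every coefficient has modulus at
most `A`. In `|p(z₀ + h)|² - |a₀|²` the cross term `2 Re(conj(a₀) a_k h^k) = 2 Re(conj(u_k) h^k)`
is the main one: the angle `θ` rotates `u_k^(k-1)` so that its real part becomes `-c_k / 2`, which
makes this term exactly `-6 A² C_k |h|^k` when `h = z₁ - z₀`. Geometric series bound `R` and
`a_k h^k + R` by `A |h|^(k+1) / (1 - |h|)` and `A |h|^k / (1 - |h|)`, and since
`|h| = C_k / 3 ≤ 1 / 9` the two remaining terms sum to at most `6 A² |h|^(k+1) / (1 - |h|)`.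
-/

section PolynomialEstimates

theorem norm_eval_le_div_one_sub_norm {R : Type*} [SeminormedRing R] [NormOneClass R] {q : R[X]}
    {A : ℝ} (hA : ∀ j, ‖q.coeff j‖ ≤ A) {h : R} (hh : ‖h‖ < 1) :
    ‖q.eval h‖ ≤ A / (1 - ‖h‖) := by
  have hA0 : 0 ≤ A := (norm_nonneg _).trans (hA 0)
  have hgeom : ∑ j ∈ Finset.range (q.natDegree + 1), ‖h‖ ^ j ≤ (1 - ‖h‖)⁻¹ := by
    rw [← tsum_geometric_of_lt_one (norm_nonneg h) hh]
    exact (summable_geometric_of_lt_one (norm_nonneg h) hh).sum_le_tsum _ fun _ _ => by positivity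
  calc ‖q.eval h‖
      = ‖∑ j ∈ Finset.range (q.natDegree + 1), q.coeff j * h ^ j‖ := by rw [eval_eq_sum_range]
    _ ≤ ∑ j ∈ Finset.range (q.natDegree + 1), A * ‖h‖ ^ j :=
        norm_sum_le_of_le _ fun j _ =>
          (norm_mul_le _ _).trans (mul_le_mul (hA j) (norm_pow_le h j) (norm_nonneg _) hA0)
    _ = A * ∑ j ∈ Finset.range (q.natDegree + 1), ‖h‖ ^ j := (Finset.mul_sum _ _ _).symm
    _ ≤ A / (1 - ‖h‖) := mul_le_mul_of_nonneg_left hgeom hA0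

theorem exists_eq_C_add_X_pow_mul {R : Type*} [Ring R] {q : R[X]} {k : ℕ} (hk : k ≠ 0)
    (hq : ∀ j, 1 ≤ j → j < k → q.coeff j = 0) :
    ∃ t : R[X], q = C (q.coeff 0) + X ^ k * t ∧ ∀ j, t.coeff j = q.coeff (j + k) := by
  obtain ⟨t, ht⟩ : X ^ k ∣ q - C (q.coeff 0) := X_pow_dvd_iff.2 fun j hj => by
    rcases j with _ | j
    · simp
    · simp [coeff_C_succ, hq _ (Nat.succ_pos j) hj]
  refine ⟨t, by rw [← ht, add_sub_cancel], fun j => ?_⟩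
  rw [← coeff_X_pow_mul t k j, ← ht, coeff_sub, coeff_C_of_ne_zero (by omega), sub_zero]

theorem exists_eval_eq_coeff_zero_add {R : Type*} [SeminormedCommRing R] [NormOneClass R]
    {q : R[X]} {A : ℝ} (hA : ∀ j, ‖q.coeff j‖ ≤ A) {k : ℕ} (hk : k ≠ 0)
    (hq : ∀ j, 1 ≤ j → j < k → q.coeff j = 0) {h : R} (hh : ‖h‖ < 1) :
    ∃ r : R, q.eval h = q.coeff 0 + (q.coeff k * h ^ k + r) ∧
      ‖q.coeff k * h ^ k + r‖ ≤ ‖h‖ ^ k * (A / (1 - ‖h‖)) ∧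
      ‖r‖ ≤ ‖h‖ ^ (k + 1) * (A / (1 - ‖h‖)) := by
  obtain ⟨t, hqt, ht⟩ := exists_eq_C_add_X_pow_mul hk hq
  have norm_pow_mul_eval_le {s : R[X]} (hs : ∀ j, ‖s.coeff j‖ ≤ A) (n : ℕ) :
      ‖h ^ n * s.eval h‖ ≤ ‖h‖ ^ n * (A / (1 - ‖h‖)) :=
    (norm_mul_le _ _).trans (mul_le_mul (norm_pow_le h n)
      (norm_eval_le_div_one_sub_norm hs hh) (norm_nonneg _) (by positivity))
  have t_eval : t.eval h = t.divX.eval h * h + q.coeff k := by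
    conv_lhs => rw [← divX_mul_X_add t]
    simp [ht]
  have leading_add : q.coeff k * h ^ k + h ^ (k + 1) * t.divX.eval h = h ^ k * t.eval h := by
    rw [t_eval]; ring
  refine ⟨h ^ (k + 1) * t.divX.eval h, ?_, ?_, ?_⟩
  · conv_lhs => rw [hqt]
    rw [leading_add]
    simp
  · rw [leading_add]
    exact norm_pow_mul_eval_le (fun j => by rw [ht]; exact hA _) k
  · exact norm_pow_mul_eval_le (fun j => by rw [coeff_divX, ht]; exact hA _) (k + 1)

theorem norm_sq_eval_sub_norm_sq_coeff_zero_le {𝕜 : Type*} [RCLike 𝕜] {q : 𝕜[X]} {A : ℝ}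
    (hA : ∀ j, ‖q.coeff j‖ ≤ A) {k : ℕ} (hk : k ≠ 0) (hq : ∀ j, 1 ≤ j → j < k → q.coeff j = 0)
    {h : 𝕜} (hh : ‖h‖ ≤ 3 / 4) :
    ‖q.eval h‖ ^ 2 - ‖q.coeff 0‖ ^ 2 ≤
      2 * RCLike.re (inner 𝕜 (q.coeff 0) (q.coeff k * h ^ k)) +
        6 * A ^ 2 * (‖h‖ ^ (k + 1) / (1 - ‖h‖)) := by
  have hh1 : ‖h‖ < 1 := by linarith
  have hpos : 0 < 1 - ‖h‖ := by linarith
  obtain ⟨r, eval_eq, norm_leading_add_le, norm_r_le⟩ := exists_eval_eq_coeff_zero_add hA hk hq hh1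
  set a := q.coeff 0
  set b := q.coeff k * h ^ k
  have cross_le : RCLike.re (inner 𝕜 a r) ≤ A * (‖h‖ ^ (k + 1) * (A / (1 - ‖h‖))) :=
    (re_inner_le_norm a r).trans
      (mul_le_mul (hA 0) norm_r_le (norm_nonneg _) ((norm_nonneg _).trans (hA 0)))
  have sq_le : ‖b + r‖ ^ 2 ≤ 4 * (A ^ 2 * (‖h‖ ^ (k + 1) / (1 - ‖h‖))) := by
    obtain ⟨m, rfl⟩ := Nat.exists_eq_succ_of_ne_zero hk
    have ratio_le : ‖h‖ ^ m / (1 - ‖h‖) ≤ 4 := by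
      rw [div_le_iff₀ hpos]
      linarith [pow_le_one₀ (n := m) (norm_nonneg h) hh1.le]
    calc ‖b + r‖ ^ 2
        ≤ (‖h‖ ^ (m + 1) * (A / (1 - ‖h‖))) ^ 2 := by gcongr
      _ = ‖h‖ ^ m / (1 - ‖h‖) * (A ^ 2 * (‖h‖ ^ (m + 1 + 1) / (1 - ‖h‖))) := by ring
      _ ≤ 4 * (A ^ 2 * (‖h‖ ^ (m + 1 + 1) / (1 - ‖h‖))) := by gcongr
  calc ‖q.eval h‖ ^ 2 - ‖a‖ ^ 2
      = 2 * RCLike.re (inner 𝕜 a b) + 2 * RCLike.re (inner 𝕜 a r) + ‖b + r‖ ^ 2 := by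
        rw [eval_eq, norm_add_sq (𝕜 := 𝕜), inner_add_right, map_add]; ring
    _ ≤ 2 * RCLike.re (inner 𝕜 a b)
          + 2 * (A * (‖h‖ ^ (k + 1) * (A / (1 - ‖h‖))))
          + 4 * (A ^ 2 * (‖h‖ ^ (k + 1) / (1 - ‖h‖))) := by gcongr
    _ = 2 * RCLike.re (inner 𝕜 a b) + 6 * A ^ 2 * (‖h‖ ^ (k + 1) / (1 - ‖h‖)) := by ring

end PolynomialEstimates

section RobustNewtonParameters

variable {p : ℂ[X]} {m : ℕ} {z : ℂ}

theorem coeff_taylor_eq_dEval_div_factorial (p : ℂ[X]) (j : ℕ) (z : ℂ) :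
    (taylor z p).coeff j = dEval p j z / (Nat.factorial j : ℂ) := by
  rw [taylor_coeff, eq_div_iff (Nat.cast_ne_zero.2 j.factorial_ne_zero), dEval,
    ← factorial_smul_hasseDeriv]
  simp [mul_comm]

theorem norm_coeff_taylor_le_Amax (p : ℂ[X]) (z : ℂ) (j : ℕ) :
    ‖(taylor z p).coeff j‖ ≤ Amax p z := by
  have le_of_le_natDegree {i : ℕ} (hi : i ≤ p.natDegree) : ‖(taylor z p).coeff i‖ ≤ Amax p z := by
    rw [coeff_taylor_eq_dEval_div_factorial, norm_div, Complex.norm_natCast]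
    exact Finset.le_sup' (fun i => ‖dEval p i z‖ / (Nat.factorial i))
      (Finset.mem_range_succ_iff.2 hi)
  rcases le_or_gt j p.natDegree with hj | hj
  · exact le_of_le_natDegree hj
  · rw [coeff_eq_zero_of_natDegree_lt (by rwa [natDegree_taylor]), norm_zero]
    exact (norm_nonneg _).trans (le_of_le_natDegree (Nat.zero_le _))

theorem isLeast_kIndex (hp : p.natDegree ≠ 0) (z : ℂ) :
    IsLeast {j | 1 ≤ j ∧ dEval p j z ≠ 0} (kIndex p z) := by
  have dEval_natDegree_ne_zero : dEval p p.natDegree z ≠ 0 := fun h => by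
    have hcoeff := coeff_taylor_natDegree (r := z) (f := p)
    rw [coeff_taylor_eq_dEval_div_factorial, h, zero_div, eq_comm, leadingCoeff_eq_zero] at hcoeff
    simp [hcoeff] at hp
  exact ⟨Nat.sInf_mem ⟨p.natDegree, Nat.one_le_iff_ne_zero.2 hp, dEval_natDegree_ne_zero⟩,
    fun _ => Nat.sInf_le⟩

theorem uPar_eq_coeff_mul_conj_coeff (p : ℂ[X]) (m : ℕ) (z : ℂ) :
    uPar p m z = (taylor z p).coeff 0 * (starRingEnd ℂ) ((taylor z p).coeff m) := by
  rw [coeff_taylor_eq_dEval_div_factorial p m, taylor_coeff_zero, uPar, map_div₀,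
    Complex.conj_natCast]
  ring

theorem inner_coeff_taylor_zero_mul (p : ℂ[X]) (m : ℕ) (z w : ℂ) :
    inner ℂ ((taylor z p).coeff 0) ((taylor z p).coeff m * w) =
      (starRingEnd ℂ) (uPar p m z) * w := by
  rw [uPar_eq_coeff_mul_conj_coeff, RCLike.inner_apply, map_mul, Complex.conj_conj]
  ring

theorem uPar_ne_zero (hp : p.eval z ≠ 0) (hm : dEval p m z ≠ 0) : uPar p m z ≠ 0 := by
  simp [uPar, hp, hm, Nat.factorial_ne_zero]

theorem norm_uPar_le_Amax_sq (p : ℂ[X]) (m : ℕ) (z : ℂ) : ‖uPar p m z‖ ≤ Amax p z ^ 2 := by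
  rw [uPar_eq_coeff_mul_conj_coeff, norm_mul, RCLike.norm_conj, sq]
  exact mul_le_mul (norm_coeff_taylor_le_Amax p z 0) (norm_coeff_taylor_le_Amax p z m)
    (norm_nonneg _) ((norm_nonneg _).trans (norm_coeff_taylor_le_Amax p z 0))

theorem cPar_nonneg (p : ℂ[X]) (m : ℕ) (z : ℂ) : 0 ≤ cPar p m z :=
  le_max_of_le_left (abs_nonneg _)

theorem cPar_le_two_mul_norm_uPar_pow (p : ℂ[X]) (m : ℕ) (z : ℂ) :
    cPar p m z ≤ 2 * ‖uPar p m z‖ ^ (m - 1) := by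
  rw [← norm_pow, cPar, gammaPar, deltaPar, abs_mul, abs_mul, abs_neg, abs_two]
  exact max_le (mul_le_mul_of_nonneg_left (Complex.abs_re_le_norm _) zero_le_two)
    (mul_le_mul_of_nonneg_left (Complex.abs_im_le_norm _) zero_le_two)

theorem CPar_nonneg (p : ℂ[X]) (m : ℕ) (z : ℂ) : 0 ≤ CPar p m z := by
  have := cPar_nonneg p m z
  unfold CPar
  positivity

theorem CPar_le_one_third (hm : m ≠ 0) (hu : uPar p m z ≠ 0) : CPar p m z ≤ 1 / 3 := by
  have hu_pos : 0 < ‖uPar p m z‖ := norm_pos_iff.2 hu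
  have hA := norm_uPar_le_Amax_sq p m z
  have exponents : ((m - 1 : ℕ) : ℤ) + (2 - m) = 1 := by omega
  rw [CPar, div_le_iff₀ (by linarith)]
  calc cPar p m z * ‖uPar p m z‖ ^ ((2 : ℤ) - m)
      ≤ 2 * ‖uPar p m z‖ ^ (m - 1) * ‖uPar p m z‖ ^ ((2 : ℤ) - m) := by
        gcongr
        exact cPar_le_two_mul_norm_uPar_pow p m z
    _ = 2 * ‖uPar p m z‖ := by
        rw [mul_assoc, ← zpow_natCast, ← zpow_add₀ hu_pos.ne', exponents, zpow_one]
    _ ≤ 1 / 3 * (6 * Amax p z ^ 2) := by linarith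

end RobustNewtonParameters

section RobustNewtonStep

variable {p : ℂ[X]} {m : ℕ} {z : ℂ}

theorem exp_div_natCast_mul_I_pow (hm : m ≠ 0) (φ : ℂ) :
    Complex.exp (φ / m * Complex.I) ^ m = Complex.exp (φ * Complex.I) := by
  rw [← Complex.exp_nat_mul, ← mul_assoc, mul_div_cancel₀ _ (Nat.cast_ne_zero.2 hm)]

theorem exp_thetaPar_mul_I_pow (p : ℂ[X]) (hm : m ≠ 0) (z : ℂ) :
    Complex.exp (thetaPar p m z * Complex.I) ^ m =
      if cPar p m z = |gammaPar p m z| then if gammaPar p m z < 0 then 1 else -1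
      else if deltaPar p m z < 0 then Complex.I else -Complex.I := by
  unfold thetaPar
  split_ifs
  · simp
  · rw [Complex.ofReal_div, Complex.ofReal_natCast, exp_div_natCast_mul_I_pow hm,
      Complex.exp_pi_mul_I]
  · rw [← div_div, Complex.ofReal_div, Complex.ofReal_natCast, exp_div_natCast_mul_I_pow hm]
    push_cast
    exact Complex.exp_pi_div_two_mul_I
  · have three_halves_pi :
        ((3 * Real.pi / 2 : ℝ) : ℂ) * Complex.I
          = Real.pi * Complex.I + Real.pi / 2 * Complex.I := by
      push_cast; ring
    rw [← div_div, Complex.ofReal_div, Complex.ofReal_natCast, exp_div_natCast_mul_I_pow hm,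
      three_halves_pi, Complex.exp_add, Complex.exp_pi_mul_I, Complex.exp_pi_div_two_mul_I,
      neg_one_mul]

theorem two_mul_re_uPar_pow_mul_exp_thetaPar_pow (p : ℂ[X]) (hm : m ≠ 0) (z : ℂ) :
    2 * (uPar p m z ^ (m - 1) * Complex.exp (thetaPar p m z * Complex.I) ^ m).re =
      -cPar p m z := by
  rw [exp_thetaPar_mul_I_pow p hm z]
  split_ifs with hc hγ hδ
  · rw [hc, abs_of_neg hγ]
    simp [gammaPar]
  · rw [hc, abs_of_nonneg (not_lt.1 hγ)]
    simp [gammaPar]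
  all_goals
    have hc' : cPar p m z = |deltaPar p m z| := (max_choice _ _).resolve_left hc
  · rw [hc', abs_of_neg hδ]
    simp [deltaPar]
  · rw [hc', abs_of_nonneg (not_lt.1 hδ)]
    simp [deltaPar]

theorem norm_rniWith_sub_self (hu : uPar p m z ≠ 0) : ‖rniWith p m z - z‖ = CPar p m z / 3 := by
  rw [rniWith, add_sub_cancel_left, norm_mul, norm_mul, Complex.norm_exp_ofReal_mul_I, norm_div,
    Complex.norm_real, Complex.norm_real, norm_norm, div_self (norm_ne_zero_iff.2 hu),
    Real.norm_of_nonneg (div_nonneg (CPar_nonneg p m z) zero_le_three), mul_one, mul_one]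

theorem conj_mul_normalized_mul_pow {u : ℂ} (hu : u ≠ 0) {m : ℕ} (hm : m ≠ 0) (r : ℝ) (e : ℂ) :
    (starRingEnd ℂ) u * (r * (u / ‖u‖) * e) ^ m =
      ((r ^ m * ‖u‖ ^ ((2 : ℤ) - m) : ℝ) : ℂ) * (u ^ (m - 1) * e ^ m) := by
  have hu' : (‖u‖ : ℂ) ≠ 0 := by exact_mod_cast norm_ne_zero_iff.2 hu
  push_cast
  rw [zpow_sub₀ hu', zpow_natCast, zpow_ofNat, ← Complex.conj_mul', mul_pow, mul_pow, div_pow,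
    ← mul_pow_sub_one hm u]
  ring

theorem two_mul_re_conj_uPar_mul_rniWith_sub_self_pow (hm : m ≠ 0) (hu : uPar p m z ≠ 0) :
    2 * ((starRingEnd ℂ) (uPar p m z) * (rniWith p m z - z) ^ m).re =
      -(6 * Amax p z ^ 2 * CPar p m z * (CPar p m z / 3) ^ m) := by
  have hA : 6 * Amax p z ^ 2 ≠ 0 := by
    linarith [norm_pos_iff.2 hu, norm_uPar_le_Amax_sq p m z]
  have hC : 6 * Amax p z ^ 2 * CPar p m z = cPar p m z * ‖uPar p m z‖ ^ ((2 : ℤ) - m) :=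
    mul_div_cancel₀ _ hA
  rw [hC, rniWith, add_sub_cancel_left, conj_mul_normalized_mul_pow hu hm, Complex.re_ofReal_mul]
  linear_combination ((CPar p m z / 3) ^ m * ‖uPar p m z‖ ^ ((2 : ℤ) - m)) *
    two_mul_re_uPar_pow_mul_exp_thetaPar_pow p hm z

end RobustNewtonStep

theorem decrement_bound_via_H_general {p : ℂ[X]} {m : ℕ} {z : ℂ}
    (hm : IsLeast {j | 1 ≤ j ∧ dEval p j z ≠ 0} m) (hp : p.eval z ≠ 0) :
    ‖p.eval (rniWith p m z)‖ ^ 2 - ‖p.eval z‖ ^ 2 ≤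
      6 * Amax p z ^ 2 *
        (-CPar p m z * (CPar p m z / 3) ^ m +
          (CPar p m z / 3) ^ (m + 1) / (1 - CPar p m z / 3)) := by
  have hm0 : m ≠ 0 := Nat.one_le_iff_ne_zero.1 hm.1.1
  have hu : uPar p m z ≠ 0 := uPar_ne_zero hp hm.1.2
  have coeff_eq_zero (j : ℕ) (hj : 1 ≤ j) (hjm : j < m) : (taylor z p).coeff j = 0 := by
    have : dEval p j z = 0 := by_contra fun hne => hjm.not_ge (hm.2 ⟨hj, hne⟩)
    rw [coeff_taylor_eq_dEval_div_factorial, this, zero_div]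
  have norm_step := norm_rniWith_sub_self hu
  have norm_step_le : ‖rniWith p m z - z‖ ≤ 3 / 4 := by
    linarith [CPar_le_one_third hm0 hu]
  have estimate := norm_sq_eval_sub_norm_sq_coeff_zero_le (norm_coeff_taylor_le_Amax p z) hm0
    coeff_eq_zero norm_step_le
  rw [inner_coeff_taylor_zero_mul, RCLike.re_to_complex,
    two_mul_re_conj_uPar_mul_rniWith_sub_self_pow hm0 hu, norm_step, taylor_eval_sub,
    taylor_coeff_zero] at estimate
  linarith

/-- **Decrement bound via `H`.** With `k = k(z₀)`, `A = A(z₀)`, `C_k` the Robust Newton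
parameters at `z₀` and `z₁ = N̂_p(z₀)`, one has `F(z₁) − F(z₀) ≤ 6·A²·H_{C_k}(C_k/3)`,
where `H_C(x) = −C·x^k + x^(k+1)/(1−x)`. -/
theorem decrement_bound_via_H (p : Polynomial ℂ) (hdeg : 2 ≤ p.natDegree)
    (z₀ : ℂ) (hp : p.eval z₀ ≠ 0) :
    ‖p.eval (RN p z₀)‖ ^ 2 - ‖p.eval z₀‖ ^ 2 ≤
      6 * (Amax p z₀) ^ 2 *
        (-(CPar p (kIndex p z₀) z₀) * (CPar p (kIndex p z₀) z₀ / 3) ^ (kIndex p z₀) +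
          (CPar p (kIndex p z₀) z₀ / 3) ^ (kIndex p z₀ + 1) /
            (1 - CPar p (kIndex p z₀) z₀ / 3)) :=
  decrement_bound_via_H_general (isLeast_kIndex (by omega) z₀) hp
end
end

section
/- RNM on the imaginary axis for z² − 1: Let p(z) = z² − 1 and let z₀ = εi with ε real, ε > 0. Then the Robust Newton iterate is N̂_p(z₀) = εi − 2εi/(9(1 + ε²)); consequently the RNM orbit of z₀ remains on the positive imaginary axis, its imaginary parts form a strictly decreasing positive sequence, and the orbit converges monotonically to the critical point 0. -/
open Polynomial Filter Topology
open scoped Classical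

noncomputable section

/-!
At a point with `p'(z) ≠ 0` the method makes the damped step `z ↦ z − p(z)·conj(p'(z))/(9·A(z)²)`.
On the imaginary axis the value `|p(iy)| = 1 + y²` dominates `|p'(iy)| = 2|y|` and
`|p''(iy)|/2 = 1`, so `A(iy) = 1 + y²` and the step acts on the coordinate `y` as a real map. For
`y > 0` that map takes a value strictly between `0` and `y`, so its iterates decrease, and their
limit is a nonnegative fixed point, which can only be `0`.
-/

section DecreasingIterates

variable {α : Type*} {f : α → α} {x : α}

theorem strictAnti_iterate_of_mapsTo_of_lt_self [Preorder α] {s : Set α} (hmaps : Set.MapsTo f s s)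
    (hlt : ∀ y ∈ s, f y < y) (hx : x ∈ s) : StrictAnti fun t => f^[t] x := by
  refine strictAnti_nat_of_succ_lt fun t => ?_
  rw [Function.iterate_succ_apply']
  exact hlt _ (hmaps.iterate t hx)

theorem tendsto_iterate_of_mapsTo_Ioi_of_lt_self [ConditionallyCompleteLinearOrder α]
    [TopologicalSpace α] [OrderTopology α] {a : α} (hmaps : Set.MapsTo f (Set.Ioi a) (Set.Ioi a))
    (hlt : ∀ y ∈ Set.Ioi a, f y < y) (hcont : ∀ y ∈ Set.Ioi a, ContinuousAt f y) (hx : a < x) :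
    Tendsto (fun t => f^[t] x) atTop (𝓝 a) := by
  have hanti : Antitone fun t => f^[t] x :=
    (strictAnti_iterate_of_mapsTo_of_lt_self hmaps hlt hx).antitone
  have hgt : ∀ t, a < f^[t] x := fun t => hmaps.iterate t hx
  have hlim : Tendsto (fun t => f^[t] x) atTop (𝓝 (⨅ t, f^[t] x)) :=
    tendsto_atTop_ciInf hanti ⟨a, Set.forall_mem_range.2 fun t => (hgt t).le⟩
  rcases (le_ciInf fun t => (hgt t).le).eq_or_lt with heq | hinf
  · rwa [← heq] at hlim
  · exact absurd (isFixedPt_of_tendsto_iterate hlim (hcont _ hinf)) (hlt _ hinf).ne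

end DecreasingIterates

section RobustNewton

variable {p : ℂ[X]} {z : ℂ}

theorem kIndex_eq_one (h : dEval p 1 z ≠ 0) : kIndex p z = 1 :=
  have hmem : 1 ∈ {j : ℕ | 1 ≤ j ∧ dEval p j z ≠ 0} := ⟨le_rfl, h⟩
  le_antisymm (Nat.sInf_le hmem) (Nat.sInf_mem ⟨1, hmem⟩).1

theorem uPar_one (p : ℂ[X]) (z : ℂ) :
    uPar p 1 z = p.eval z * (starRingEnd ℂ) (dEval p 1 z) := by
  simp [uPar]

theorem cPar_one (p : ℂ[X]) (z : ℂ) : cPar p 1 z = 2 := by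
  simp [cPar, gammaPar, deltaPar]

theorem thetaPar_one (p : ℂ[X]) (z : ℂ) : thetaPar p 1 z = Real.pi := by
  simp [thetaPar, cPar, gammaPar, deltaPar]

theorem CPar_one (p : ℂ[X]) (z : ℂ) :
    CPar p 1 z = ‖uPar p 1 z‖ / (3 * Amax p z ^ 2) := by
  rw [CPar, cPar_one, show (2 : ℤ) - (1 : ℕ) = 1 from rfl, zpow_one]
  ring

theorem RN_eq_sub_of_dEval_one_ne_zero (h : dEval p 1 z ≠ 0) :
    RN p z = z - p.eval z * (starRingEnd ℂ) (dEval p 1 z) / (9 * (Amax p z : ℂ) ^ 2) := by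
  have hnormalize : (‖uPar p 1 z‖ : ℂ) * (uPar p 1 z / ‖uPar p 1 z‖) = uPar p 1 z :=
    mul_div_cancel_of_imp' fun h0 => by simpa using h0
  calc RN p z
      = z - (‖uPar p 1 z‖ : ℂ) * (uPar p 1 z / ‖uPar p 1 z‖) / (9 * (Amax p z : ℂ) ^ 2) := by
        rw [RN, kIndex_eq_one h, rniWith, thetaPar_one, CPar_one, Complex.exp_pi_mul_I]
        push_cast
        ring
    _ = _ := by rw [hnormalize, uPar_one]

theorem Amax_eq_norm_eval
    (h : ∀ j ≤ p.natDegree, ‖dEval p j z‖ / (Nat.factorial j) ≤ ‖p.eval z‖) :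
    Amax p z = ‖p.eval z‖ := by
  have hzero : ‖p.eval z‖ = ‖dEval p 0 z‖ / (Nat.factorial 0) := by simp [dEval]
  exact le_antisymm (Finset.sup'_le _ _ fun j hj => h j (Finset.mem_range_succ_iff.1 hj))
    (hzero.trans_le (Finset.le_sup' (fun j => ‖dEval p j z‖ / (Nat.factorial j))
      (Finset.mem_range.2 p.natDegree.succ_pos)))

theorem rnmOrbit_eq_iterate_of_semiconj {α : Type*} {f : α → α} {g : α → ℂ} {s : Set α} {x : α}
    (hmaps : Set.MapsTo f s s) (heval : ∀ y ∈ s, p.eval (g y) ≠ 0)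
    (hRN : ∀ y ∈ s, RN p (g y) = g (f y)) (hx : x ∈ s) (t : ℕ) :
    rnmOrbit p (g x) t = g (f^[t] x) := by
  induction t with
  | zero => rfl
  | succ t ih =>
    have hmem : f^[t] x ∈ s := hmaps.iterate t hx
    rw [rnmOrbit, ih, if_neg (heval _ hmem), hRN _ hmem, Function.iterate_succ_apply']

end RobustNewton

section ImaginaryAxis

theorem dEval_one_X_sq_sub_one (z : ℂ) : dEval (X ^ 2 - 1) 1 z = 2 * z := by
  simp [dEval, one_add_one_eq_two]

theorem dEval_two_X_sq_sub_one (z : ℂ) : dEval (X ^ 2 - 1) 2 z = 2 := by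
  simp [dEval, one_add_one_eq_two]

theorem eval_X_sq_sub_one_mul_I (y : ℝ) :
    (X ^ 2 - 1 : ℂ[X]).eval (y * Complex.I) = -(1 + (y : ℂ) ^ 2) := by
  simp only [eval_sub, eval_pow, eval_X, eval_one, mul_pow, Complex.I_sq]
  ring

theorem norm_eval_X_sq_sub_one_mul_I (y : ℝ) :
    ‖(X ^ 2 - 1 : ℂ[X]).eval (y * Complex.I)‖ = 1 + y ^ 2 := by
  rw [eval_X_sq_sub_one_mul_I, norm_neg]
  exact_mod_cast Complex.norm_of_nonneg (by positivity : 0 ≤ 1 + y ^ 2)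

theorem Amax_X_sq_sub_one_mul_I (y : ℝ) :
    Amax (X ^ 2 - 1) (y * Complex.I) = 1 + y ^ 2 := by
  have hdeg : (X ^ 2 - 1 : ℂ[X]).natDegree = 2 := natDegree_X_pow_sub_C
  rw [Amax_eq_norm_eval, norm_eval_X_sq_sub_one_mul_I]
  intro j hj
  rw [hdeg] at hj
  interval_cases j
  · simp [dEval]
  · rw [norm_eval_X_sq_sub_one_mul_I, dEval_one_X_sq_sub_one]
    simpa using two_mul_le_add_sq 1 |y|
  · rw [norm_eval_X_sq_sub_one_mul_I, dEval_two_X_sq_sub_one]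
    simpa using sq_nonneg y

/-- The Robust Newton step of `z² − 1` at `iy`, `y ≠ 0`, expressed in the coordinate `y` of the
imaginary axis. At `y = 0`, where the Robust Newton iterate is not `0`, it is the continuous
extension. -/
def axisStep (y : ℝ) : ℝ := y - 2 * y / (9 * (1 + y ^ 2))

theorem axisStep_lt_self {y : ℝ} (hy : 0 < y) : axisStep y < y :=
  sub_lt_self y (by positivity)

theorem mapsTo_axisStep_Ioi : Set.MapsTo axisStep (Set.Ioi 0) (Set.Ioi 0) := by
  intro y (hy : 0 < y)
  have hstep : 2 * y / (9 * (1 + y ^ 2)) < y := by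
    rw [div_lt_iff₀ (by positivity)]
    nlinarith [pow_pos hy 3]
  exact sub_pos.2 hstep

theorem continuous_axisStep : Continuous axisStep :=
  continuous_id.sub <| Continuous.div₀ (by fun_prop) (by fun_prop) fun y : ℝ =>
    (by positivity : 9 * (1 + y ^ 2) ≠ 0)

theorem RN_X_sq_sub_one_mul_I {y : ℝ} (hy : y ≠ 0) :
    RN (X ^ 2 - 1) (y * Complex.I) = axisStep y * Complex.I := by
  have hderiv : dEval (X ^ 2 - 1) 1 (y * Complex.I) ≠ 0 := by
    simp [dEval_one_X_sq_sub_one, hy]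
  rw [RN_eq_sub_of_dEval_one_ne_zero hderiv, eval_X_sq_sub_one_mul_I, dEval_one_X_sq_sub_one,
    Amax_X_sq_sub_one_mul_I, axisStep]
  simp only [map_mul, Complex.conj_ofNat, Complex.conj_ofReal, Complex.conj_I]
  push_cast
  field_simp

theorem rnmOrbit_X_sq_sub_one_mul_I {ε : ℝ} (hε : 0 < ε) (t : ℕ) :
    rnmOrbit (X ^ 2 - 1) (ε * Complex.I) t = (axisStep^[t] ε : ℝ) * Complex.I := by
  refine rnmOrbit_eq_iterate_of_semiconj (g := fun y : ℝ => (y : ℂ) * Complex.I)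
    mapsTo_axisStep_Ioi (fun y _ => ?_) (fun y hy => RN_X_sq_sub_one_mul_I (ne_of_gt hy)) hε t
  rw [← norm_pos_iff, norm_eval_X_sq_sub_one_mul_I]
  positivity

end ImaginaryAxis

/-- **RNM on the imaginary axis for `z² − 1`.** For `z₀ = εi` with `ε > 0`, the Robust
Newton iterate is `N̂_p(z₀) = εi − (2ε/(9(1 + ε²)))·i`; consequently the RNM orbit of `z₀`
remains on the positive imaginary axis, its imaginary parts form a strictly decreasing
(positive) sequence, and the orbit converges to the critical point `0`. -/
theorem rnm_imaginary_axis_quadratic (ε : ℝ) (hε : 0 < ε) :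
    RN (X ^ 2 - 1 : Polynomial ℂ) ((ε : ℂ) * Complex.I) =
      (ε : ℂ) * Complex.I - ((2 * ε / (9 * (1 + ε ^ 2)) : ℝ) : ℂ) * Complex.I ∧
    (∀ t : ℕ, ∃ δ : ℝ, 0 < δ ∧
      rnmOrbit (X ^ 2 - 1 : Polynomial ℂ) ((ε : ℂ) * Complex.I) t = (δ : ℂ) * Complex.I) ∧
    StrictAnti (fun t : ℕ =>
      (rnmOrbit (X ^ 2 - 1 : Polynomial ℂ) ((ε : ℂ) * Complex.I) t).im) ∧
    Filter.Tendsto (rnmOrbit (X ^ 2 - 1 : Polynomial ℂ) ((ε : ℂ) * Complex.I))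
      Filter.atTop (nhds 0) := by
  have horbit := rnmOrbit_X_sq_sub_one_mul_I hε
  refine ⟨?_, fun t => ⟨axisStep^[t] ε, mapsTo_axisStep_Ioi.iterate t hε, horbit t⟩, ?_, ?_⟩
  · rw [RN_X_sq_sub_one_mul_I hε.ne', axisStep, Complex.ofReal_sub, sub_mul]
  · simpa [horbit] using strictAnti_iterate_of_mapsTo_of_lt_self mapsTo_axisStep_Ioi
      (fun _ => axisStep_lt_self) hε
  · have hcoord : Tendsto (fun t => axisStep^[t] ε) atTop (𝓝 0) :=
      tendsto_iterate_of_mapsTo_Ioi_of_lt_self mapsTo_axisStep_Ioi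
        (fun _ => axisStep_lt_self) (fun _ _ => continuous_axisStep.continuousAt) hε
    simpa [funext horbit] using
      ((Complex.continuous_ofReal.tendsto 0).comp hcoord).mul_const Complex.I
end
end
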